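/- P-type setup: let κ₁ < κ₂ < κ₃ < κ₄ with κ₂+κ₃ ≠ κ₁+κ₄; a₂₃ = (κ₂+κ₃)/2, a₁₄ = (κ₁+κ₄)/2, c₁₄ = (κ₄−κ₁)²/4. Define θⱼ(x,y) := κⱼx + κⱼ²y, τ₁ := e^{θ₂} + e^{θ₃}, τ₂ := (κ₂−κ₁)e^{θ₁+θ₂} + (κ₃−κ₁)e^{θ₁+θ₃} + (κ₄−κ₂)e^{θ₂+θ₄} + (κ₄−κ₃)e^{θ₃+θ₄}, v₂ := ∂_x log(τ₂/τ₁), and z₂ := x + 2a₁₄y. Let 0 < α < √c₁₄. Suppose φ̃ : ℝ² → ℝ is smooth, every partial derivative ∂_x^i∂_y^j φ̃ (i, j ≥ 0, including φ̃ itself) satisfies ∫∫ |∂_x^i∂_y^j φ̃(x,y)|² e^{2αz₂} dxdy < ∞, and ∂_yφ̃ + ∂_x²φ̃ = 2v₂∂_xφ̃ on ℝ². Then φ̃ ≡ 0. -/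

import Mathlib

open MeasureTheory

noncomputable def pXr (f : ℝ → ℝ → ℝ) : ℝ → ℝ → ℝ :=
  fun x y => deriv (fun s => f s y) x

noncomputable def pYr (f : ℝ → ℝ → ℝ) : ℝ → ℝ → ℝ :=
  fun x y => deriv (fun s => f x s) y

/-- τ-function of the (t = 0) P-type 2-line soliton -/
noncomputable def Ptau (κ₁ κ₂ κ₃ κ₄ : ℝ) (x y : ℝ) : ℝ :=
  (κ₂ - κ₁) * Real.exp ((κ₁ + κ₂)*x + (κ₁^2 + κ₂^2)*y)
  + (κ₃ - κ₁) * Real.exp ((κ₁ + κ₃)*x + (κ₁^2 + κ₃^2)*y)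
  + (κ₄ - κ₂) * Real.exp ((κ₂ + κ₄)*x + (κ₂^2 + κ₄^2)*y)
  + (κ₄ - κ₃) * Real.exp ((κ₃ + κ₄)*x + (κ₃^2 + κ₄^2)*y)

/-- τ-function of the [2,3]-soliton factor -/
noncomputable def Ptau1 (κ₂ κ₃ : ℝ) (x y : ℝ) : ℝ :=
  Real.exp (κ₂*x + κ₂^2*y) + Real.exp (κ₃*x + κ₃^2*y)

/-!
The ratio `τ₂ / τ₁` is a sum `a + b` of two positive functions `a = e^A` and `b = e^B`, the Darboux
transforms by `τ₁` of `e^{θ₄}` and `-e^{θ₁}`; both solve `ψ_y = ψ_xx + 2 (log τ₁)_xx ψ`. Hence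
`v₂ = ∂_x log (a + b)`, and `R = a / (a + b)` solves `R_y = R_xx + 2 v₂ R_x` with `R_x > 0`. For a
solution `φ` of `φ_y + φ_xx = 2 v₂ φ_x` this yields the energy identity
`(φ² R_x)_y + (2 φ φ_x R_x - φ² R_y)_x = 2 φ_x² R_x`. Since `R_x ≲ e^{-(κ₄ - κ₁)|z₂|}` is dominated
by the weight, integrating over the plane gives `φ_x = 0`, and a function of `y` alone is square
integrable against `e^{2αz₂}` only if it vanishes.
-/

open Asymptotics Real Set
open scoped ContDiff

section PartialDerivatives

variable {f g : ℝ → ℝ → ℝ} {m n : ℕ∞ω}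

lemma hasDerivAt_fst_fderiv {p : ℝ × ℝ}
    (hf : DifferentiableAt ℝ (fun p : ℝ × ℝ => f p.1 p.2) p) :
    HasDerivAt (fun s => f s p.2) (fderiv ℝ (fun p : ℝ × ℝ => f p.1 p.2) p (1, 0)) p.1 :=
  HasFDerivAt.comp_hasDerivAt (f := fun s => (s, p.2)) p.1 hf.hasFDerivAt
    ((hasDerivAt_id' p.1).prodMk (hasDerivAt_const p.1 p.2))

lemma hasDerivAt_snd_fderiv {p : ℝ × ℝ}
    (hf : DifferentiableAt ℝ (fun p : ℝ × ℝ => f p.1 p.2) p) :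
    HasDerivAt (fun s => f p.1 s) (fderiv ℝ (fun p : ℝ × ℝ => f p.1 p.2) p (0, 1)) p.2 :=
  HasFDerivAt.comp_hasDerivAt (f := fun s => (p.1, s)) p.2 hf.hasFDerivAt
    ((hasDerivAt_const p.2 p.1).prodMk (hasDerivAt_id' p.2))

lemma pXr_eq_fderiv (hf : Differentiable ℝ fun p : ℝ × ℝ => f p.1 p.2) (p : ℝ × ℝ) :
    pXr f p.1 p.2 = fderiv ℝ (fun p : ℝ × ℝ => f p.1 p.2) p (1, 0) :=
  (hasDerivAt_fst_fderiv (hf p)).deriv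

lemma pYr_eq_fderiv (hf : Differentiable ℝ fun p : ℝ × ℝ => f p.1 p.2) (p : ℝ × ℝ) :
    pYr f p.1 p.2 = fderiv ℝ (fun p : ℝ × ℝ => f p.1 p.2) p (0, 1) :=
  (hasDerivAt_snd_fderiv (hf p)).deriv

lemma hasDerivAt_pXr (hf : Differentiable ℝ fun p : ℝ × ℝ => f p.1 p.2) (x y : ℝ) :
    HasDerivAt (fun s => f s y) (pXr f x y) x :=
  (hasDerivAt_fst_fderiv (hf (x, y))).differentiableAt.hasDerivAt

lemma hasDerivAt_pYr (hf : Differentiable ℝ fun p : ℝ × ℝ => f p.1 p.2) (x y : ℝ) :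
    HasDerivAt (fun s => f x s) (pYr f x y) y :=
  (hasDerivAt_snd_fderiv (hf (x, y))).differentiableAt.hasDerivAt

lemma pXr_eq_of_hasDerivAt (h : ∀ x y, HasDerivAt (fun s => f s y) (g x y) x) : pXr f = g :=
  funext₂ fun x y => (h x y).deriv

lemma pYr_eq_of_hasDerivAt (h : ∀ x y, HasDerivAt (fun s => f x s) (g x y) y) : pYr f = g :=
  funext₂ fun x y => (h x y).deriv

lemma pXr_sub (hf : Differentiable ℝ fun p : ℝ × ℝ => f p.1 p.2)
    (hg : Differentiable ℝ fun p : ℝ × ℝ => g p.1 p.2) :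
    pXr (fun x y => f x y - g x y) = fun x y => pXr f x y - pXr g x y :=
  pXr_eq_of_hasDerivAt fun x y => (hasDerivAt_pXr hf x y).fun_sub (hasDerivAt_pXr hg x y)

lemma pYr_sub (hf : Differentiable ℝ fun p : ℝ × ℝ => f p.1 p.2)
    (hg : Differentiable ℝ fun p : ℝ × ℝ => g p.1 p.2) :
    pYr (fun x y => f x y - g x y) = fun x y => pYr f x y - pYr g x y :=
  pYr_eq_of_hasDerivAt fun x y => (hasDerivAt_pYr hf x y).fun_sub (hasDerivAt_pYr hg x y)

lemma contDiff_pXr (hf : ContDiff ℝ n fun p : ℝ × ℝ => f p.1 p.2) (hmn : m + 1 ≤ n) :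
    ContDiff ℝ m fun p : ℝ × ℝ => pXr f p.1 p.2 := by
  simp only [pXr_eq_fderiv (hf.differentiable (by rintro rfl; simp at hmn))]
  exact (hf.fderiv_right hmn).clm_apply contDiff_const

lemma contDiff_pYr (hf : ContDiff ℝ n fun p : ℝ × ℝ => f p.1 p.2) (hmn : m + 1 ≤ n) :
    ContDiff ℝ m fun p : ℝ × ℝ => pYr f p.1 p.2 := by
  simp only [pYr_eq_fderiv (hf.differentiable (by rintro rfl; simp at hmn))]
  exact (hf.fderiv_right hmn).clm_apply contDiff_const

lemma differentiable_pXr (hf : ContDiff ℝ 2 fun p : ℝ × ℝ => f p.1 p.2) :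
    Differentiable ℝ fun p : ℝ × ℝ => pXr f p.1 p.2 :=
  (contDiff_pXr hf one_add_one_eq_two.le).differentiable one_ne_zero

lemma differentiable_pYr (hf : ContDiff ℝ 2 fun p : ℝ × ℝ => f p.1 p.2) :
    Differentiable ℝ fun p : ℝ × ℝ => pYr f p.1 p.2 :=
  (contDiff_pYr hf one_add_one_eq_two.le).differentiable one_ne_zero

lemma pYr_pXr_comm (hf : ContDiff ℝ 2 fun p : ℝ × ℝ => f p.1 p.2) :
    pYr (pXr f) = pXr (pYr f) := by
  have hd : Differentiable ℝ fun p : ℝ × ℝ => f p.1 p.2 := hf.differentiable two_ne_zero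
  have hdd : Differentiable ℝ (fderiv ℝ fun p : ℝ × ℝ => f p.1 p.2) :=
    (hf.fderiv_right one_add_one_eq_two.le).differentiable one_ne_zero
  have fderiv_apply (u v : ℝ × ℝ) (p : ℝ × ℝ) :
      fderiv ℝ (fun p => fderiv ℝ (fun p : ℝ × ℝ => f p.1 p.2) p u) p v
        = fderiv ℝ (fderiv ℝ fun p : ℝ × ℝ => f p.1 p.2) p v u := by
    simp [fderiv_clm_apply (hdd p) (differentiableAt_const u)]
  funext x y
  rw [pYr_eq_fderiv (differentiable_pXr hf) (x, y), pXr_eq_fderiv (differentiable_pYr hf) (x, y)]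
  simp only [pXr_eq_fderiv hd, pYr_eq_fderiv hd, fderiv_apply]
  exact hf.contDiffAt.isSymmSndFDerivAt (by simp) _ _

end PartialDerivatives

section Integrals

lemma integral_lineDeriv_eq_zero {E F : Type*} [NormedAddCommGroup E] [NormedSpace ℝ E]
    [FiniteDimensional ℝ E] [MeasurableSpace E] [BorelSpace E] {μ : Measure E}
    [μ.IsAddHaarMeasure] [NormedAddCommGroup F] [NormedSpace ℝ F] {g g' : E → F} {v : E}
    (hg : ∀ x, HasLineDerivAt ℝ g (g' x) x v) (hgi : Integrable g μ) (hgi' : Integrable g' μ) :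
    ∫ x, g' x ∂μ = 0 := by
  have h := integral_bilinear_hasLineDerivAt_right_eq_neg_left_of_integrable
    (f := fun _ : E => (1 : ℝ)) (f' := 0) (B := ContinuousLinearMap.lsmul ℝ ℝ) (μ := μ)
    (by simp) (by simpa using hgi') (by simpa using hgi)
    (fun x _ => (hasFDerivAt_const (1 : ℝ) x).hasLineDerivAt v) (fun x _ => hg x)
  simpa using h

variable {f : ℝ → ℝ → ℝ}

lemma integral_pXr_eq_zero (hf : Differentiable ℝ fun p : ℝ × ℝ => f p.1 p.2)
    (hfi : Integrable fun p : ℝ × ℝ => f p.1 p.2)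
    (hfi' : Integrable fun p : ℝ × ℝ => pXr f p.1 p.2) :
    ∫ p : ℝ × ℝ, pXr f p.1 p.2 = 0 :=
  integral_lineDeriv_eq_zero
    (fun p => pXr_eq_fderiv hf p ▸ (hf p).hasFDerivAt.hasLineDerivAt (1, 0)) hfi hfi'

lemma integral_pYr_eq_zero (hf : Differentiable ℝ fun p : ℝ × ℝ => f p.1 p.2)
    (hfi : Integrable fun p : ℝ × ℝ => f p.1 p.2)
    (hfi' : Integrable fun p : ℝ × ℝ => pYr f p.1 p.2) :
    ∫ p : ℝ × ℝ, pYr f p.1 p.2 = 0 :=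
  integral_lineDeriv_eq_zero
    (fun p => pYr_eq_fderiv hf p ▸ (hf p).hasFDerivAt.hasLineDerivAt (0, 1)) hfi hfi'

lemma eq_zero_of_integral_eq_zero {X : Type*} [TopologicalSpace X] [MeasurableSpace X]
    {μ : Measure X} [μ.IsOpenPosMeasure] {g : X → ℝ} (hg : Continuous g) (h0 : 0 ≤ g)
    (hi : Integrable g μ) (h : ∫ x, g x ∂μ = 0) : g = 0 :=
  Measure.eq_of_ae_eq ((integral_eq_zero_iff_of_nonneg h0 hi).1 h) hg continuous_zero

lemma integrable_mul_mul_of_isBigO_weight {X : Type*} [MeasurableSpace X] {μ : Measure X}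
    {f g r W : X → ℝ} (hf : AEStronglyMeasurable f μ) (hg : AEStronglyMeasurable g μ)
    (hr : AEStronglyMeasurable r μ) (hfW : Integrable (fun x => f x ^ 2 * W x) μ)
    (hgW : Integrable (fun x => g x ^ 2 * W x) μ) (hrW : r =O[⊤] W) :
    Integrable (fun x => f x * g x * r x) μ := by
  obtain ⟨C, hC⟩ := isBigO_top.1 hrW
  refine ((hfW.norm.add hgW.norm).const_mul (C / 2)).mono' ((hf.mul hg).mul hr)
    (.of_forall fun x => ?_)
  have hfg : |f x * g x| ≤ (f x ^ 2 + g x ^ 2) / 2 := by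
    rw [abs_mul, ← sq_abs (f x), ← sq_abs (g x)]
    linarith [two_mul_le_add_sq |f x| |g x|]
  calc ‖f x * g x * r x‖ = |f x * g x| * ‖r x‖ := norm_mul _ _
    _ ≤ (f x ^ 2 + g x ^ 2) / 2 * (C * ‖W x‖) :=
      mul_le_mul hfg (hC x) (norm_nonneg _) (by positivity)
    _ = C / 2 * (‖f x ^ 2 * W x‖ + ‖g x ^ 2 * W x‖) := by
      simp only [norm_mul, norm_pow, norm_eq_abs, sq_abs]
      ring

lemma not_integrable_exp_const_mul (a : ℝ) : ¬ Integrable fun x : ℝ => exp (a * x) := fun h => by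
  have hcosh : Integrable fun x : ℝ => exp (a * x) + exp (a * -x) := h.add h.comp_neg
  have hone : Integrable fun _ : ℝ => (1 : ℝ) :=
    hcosh.mono' aestronglyMeasurable_const <| .of_forall fun x => by
      rw [norm_one]
      nlinarith [add_one_le_exp (a * x), add_one_le_exp (a * -x)]
  simp [integrable_const_iff, isFiniteMeasure_iff] at hone

lemma eq_zero_of_integrable_mul_of_not_integrable_fst {g : ℝ → ℝ} {W : ℝ × ℝ → ℝ}
    (hg : Continuous g) (hW : ∀ y, ¬ Integrable fun x => W (x, y))
    (h : Integrable fun p : ℝ × ℝ => g p.2 * W p) : g = 0 := by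
  refine Measure.eq_of_ae_eq (μ := volume) ?_ hg continuous_zero
  filter_upwards [h.prod_left_ae] with y hy
  by_contra hgy
  exact hW y ((integrable_const_mul_iff (IsUnit.mk0 _ hgy) _).1 hy)

end Integrals

/-- `R` is a solution, increasing in `x`, of the equation `R_y = R_xx + 2 v R_x` dual to
`f_y + f_xx = 2 v f_x`, whose derivatives entering the energy identity are dominated by the
weight `W`. Then `R_x` is a positive solution of the adjoint equation, with flux `R_y`. -/
structure IsDominatedDualSolution (v R : ℝ → ℝ → ℝ) (W : ℝ × ℝ → ℝ) : Prop where
  contDiff : ContDiff ℝ 2 fun p : ℝ × ℝ => R p.1 p.2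
  pYr_eq : ∀ x y, pYr R x y = pXr (pXr R) x y + 2 * v x y * pXr R x y
  pXr_pos : ∀ x y, 0 < pXr R x y
  isBigO_pXr : (fun p : ℝ × ℝ => pXr R p.1 p.2) =O[⊤] W
  isBigO_pYr : (fun p : ℝ × ℝ => pYr R p.1 p.2) =O[⊤] W
  isBigO_pXr_pYr : (fun p : ℝ × ℝ => pXr (pYr R) p.1 p.2) =O[⊤] W

section Energy

variable {f v R : ℝ → ℝ → ℝ} {W : ℝ × ℝ → ℝ}

/-- The energy density `f² R_x` of `f`, whose evolution in `y` is controlled when `R` is a solution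
of the dual equation. -/
noncomputable def energyDensity (f R : ℝ → ℝ → ℝ) (x y : ℝ) : ℝ :=
  f x y * f x y * pXr R x y

/-- The flux in `x` that balances `energyDensity f R` up to the dissipation `2 f_x² R_x`. -/
noncomputable def energyFlux (f R : ℝ → ℝ → ℝ) (x y : ℝ) : ℝ :=
  2 * (f x y * pXr f x y * pXr R x y) - f x y * f x y * pYr R x y

lemma pYr_energyDensity (hf : Differentiable ℝ fun p : ℝ × ℝ => f p.1 p.2)
    (hR : ContDiff ℝ 2 fun p : ℝ × ℝ => R p.1 p.2) (x y : ℝ) :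
    pYr (energyDensity f R) x y
      = 2 * (f x y * pYr f x y * pXr R x y) + f x y * f x y * pXr (pYr R) x y := by
  have df := hasDerivAt_pYr hf x y
  have dRx := hasDerivAt_pYr (differentiable_pXr hR) x y
  refine (((df.mul df).mul dRx).congr_deriv ?_).deriv
  simp only [pYr_pXr_comm hR, Pi.mul_apply]
  ring

lemma pXr_energyFlux (hf : ContDiff ℝ 2 fun p : ℝ × ℝ => f p.1 p.2)
    (hfv : ∀ x y, pYr f x y + pXr (pXr f) x y = 2 * v x y * pXr f x y)
    (hR : ContDiff ℝ 2 fun p : ℝ × ℝ => R p.1 p.2)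
    (hRv : ∀ x y, pYr R x y = pXr (pXr R) x y + 2 * v x y * pXr R x y) (x y : ℝ) :
    pXr (energyFlux f R) x y
      = 2 * (pXr f x y * pXr f x y * pXr R x y) - pYr (energyDensity f R) x y := by
  have df := hasDerivAt_pXr (hf.differentiable two_ne_zero) x y
  have dfx := hasDerivAt_pXr (differentiable_pXr hf) x y
  have dRx := hasDerivAt_pXr (differentiable_pXr hR) x y
  have dRy := hasDerivAt_pXr (differentiable_pYr hR) x y
  refine (((((df.mul dfx).mul dRx).const_mul 2).sub ((df.mul df).mul dRy)).congr_deriv ?_).deriv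
  rw [pYr_energyDensity (hf.differentiable two_ne_zero) hR, hRv]
  simp only [Pi.mul_apply]
  linear_combination (2 * f x y * pXr R x y) * hfv x y

lemma differentiable_energyDensity (hf : Differentiable ℝ fun p : ℝ × ℝ => f p.1 p.2)
    (hR : ContDiff ℝ 2 fun p : ℝ × ℝ => R p.1 p.2) :
    Differentiable ℝ fun p : ℝ × ℝ => energyDensity f R p.1 p.2 :=
  (hf.mul hf).mul (differentiable_pXr hR)

lemma differentiable_energyFlux (hf : ContDiff ℝ 2 fun p : ℝ × ℝ => f p.1 p.2)
    (hR : ContDiff ℝ 2 fun p : ℝ × ℝ => R p.1 p.2) :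
    Differentiable ℝ fun p : ℝ × ℝ => energyFlux f R p.1 p.2 := by
  have df := hf.differentiable two_ne_zero
  exact (((df.mul (differentiable_pXr hf)).mul (differentiable_pXr hR)).const_mul 2).sub
    ((df.mul df).mul (differentiable_pYr hR))

namespace IsDominatedDualSolution

lemma integrable_mul_mul_pXr (hR : IsDominatedDualSolution v R W) {g h : ℝ × ℝ → ℝ}
    (hg : Continuous g) (hh : Continuous h)
    (hgW : Integrable fun p => g p ^ 2 * W p) (hhW : Integrable fun p => h p ^ 2 * W p) :
    Integrable fun p => g p * h p * pXr R p.1 p.2 :=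
  integrable_mul_mul_of_isBigO_weight hg.aestronglyMeasurable hh.aestronglyMeasurable
    (differentiable_pXr hR.contDiff).continuous.aestronglyMeasurable hgW hhW hR.isBigO_pXr

lemma integrable_pYr_energyDensity (hR : IsDominatedDualSolution v R W)
    (hf : ContDiff ℝ 1 fun p : ℝ × ℝ => f p.1 p.2)
    (hfW : Integrable fun p : ℝ × ℝ => f p.1 p.2 ^ 2 * W p)
    (hfyW : Integrable fun p : ℝ × ℝ => pYr f p.1 p.2 ^ 2 * W p) :
    Integrable fun p : ℝ × ℝ => pYr (energyDensity f R) p.1 p.2 := by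
  have cfy := (contDiff_pYr hf (zero_add _).le).continuous
  have cRxy := (contDiff_pXr (contDiff_pYr hR.contDiff one_add_one_eq_two.le)
    (zero_add _).le).continuous
  simp only [pYr_energyDensity (hf.differentiable one_ne_zero) hR.contDiff]
  exact ((hR.integrable_mul_mul_pXr hf.continuous cfy hfW hfyW).const_mul 2).add
    (integrable_mul_mul_of_isBigO_weight hf.continuous.aestronglyMeasurable
      hf.continuous.aestronglyMeasurable cRxy.aestronglyMeasurable hfW hfW hR.isBigO_pXr_pYr)

lemma integrable_energyFlux (hR : IsDominatedDualSolution v R W)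
    (hf : ContDiff ℝ 1 fun p : ℝ × ℝ => f p.1 p.2)
    (hfW : Integrable fun p : ℝ × ℝ => f p.1 p.2 ^ 2 * W p)
    (hfxW : Integrable fun p : ℝ × ℝ => pXr f p.1 p.2 ^ 2 * W p) :
    Integrable fun p : ℝ × ℝ => energyFlux f R p.1 p.2 := by
  have cfx := (contDiff_pXr hf (zero_add _).le).continuous
  have cRy := (differentiable_pYr hR.contDiff).continuous
  exact ((hR.integrable_mul_mul_pXr hf.continuous cfx hfW hfxW).const_mul 2).sub
    (integrable_mul_mul_of_isBigO_weight hf.continuous.aestronglyMeasurable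
      hf.continuous.aestronglyMeasurable cRy.aestronglyMeasurable hfW hfW hR.isBigO_pYr)

theorem pXr_eq_zero (hR : IsDominatedDualSolution v R W)
    (hf : ContDiff ℝ 2 fun p : ℝ × ℝ => f p.1 p.2)
    (hfv : ∀ x y, pYr f x y + pXr (pXr f) x y = 2 * v x y * pXr f x y)
    (hfW : Integrable fun p : ℝ × ℝ => f p.1 p.2 ^ 2 * W p)
    (hfxW : Integrable fun p : ℝ × ℝ => pXr f p.1 p.2 ^ 2 * W p)
    (hfyW : Integrable fun p : ℝ × ℝ => pYr f p.1 p.2 ^ 2 * W p) (x y : ℝ) :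
    pXr f x y = 0 := by
  have hf₁ := hf.of_le one_le_two
  have cfx := (differentiable_pXr hf).continuous
  have cRx := (differentiable_pXr hR.contDiff).continuous
  have iDensity : Integrable fun p : ℝ × ℝ => energyDensity f R p.1 p.2 :=
    hR.integrable_mul_mul_pXr hf.continuous hf.continuous hfW hfW
  have iDensity_y := hR.integrable_pYr_energyDensity hf₁ hfW hfyW
  have iFlux := hR.integrable_energyFlux hf₁ hfW hfxW
  have iDissipation := hR.integrable_mul_mul_pXr cfx cfx hfxW hfxW
  have integral_density_y := integral_pYr_eq_zero
    (differentiable_energyDensity (hf.differentiable two_ne_zero) hR.contDiff) iDensity iDensity_y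
  have flux_x := pXr_energyFlux hf hfv hR.contDiff hR.pYr_eq
  have integral_flux_x := integral_pXr_eq_zero (differentiable_energyFlux hf hR.contDiff) iFlux
    (by simp only [flux_x]; exact (iDissipation.const_mul 2).sub iDensity_y)
  have integral_dissipation :
      ∫ p : ℝ × ℝ, pXr f p.1 p.2 * pXr f p.1 p.2 * pXr R p.1 p.2 = 0 := by
    simp only [flux_x] at integral_flux_x
    rw [integral_sub (iDissipation.const_mul 2) iDensity_y, integral_density_y, sub_zero,
      integral_const_mul] at integral_flux_x
    linarith
  have h := congrFun (eq_zero_of_integral_eq_zero ((cfx.mul cfx).mul cRx)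
    (fun p => mul_nonneg (mul_self_nonneg _) (hR.pXr_pos _ _).le) iDissipation
    integral_dissipation) (x, y)
  simpa [(hR.pXr_pos x y).ne'] using h

end IsDominatedDualSolution

end Energy

section Sigmoid

lemma sigmoid_le_exp (t : ℝ) : sigmoid t ≤ exp t := by
  rw [← neg_neg t, ← sigmoid_mul_rexp_neg]
  exact mul_le_of_le_one_left (exp_pos _).le (sigmoid_le_one _)

lemma sigmoid_mul_one_sub_le_exp_neg_abs (t : ℝ) : sigmoid t * (1 - sigmoid t) ≤ exp (-|t|) := by
  rw [← sigmoid_neg]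
  rcases abs_cases t with ⟨ht, -⟩ | ⟨ht, -⟩ <;> rw [ht]
  · exact (mul_le_of_le_one_left (sigmoid_nonneg _) (sigmoid_le_one _)).trans (sigmoid_le_exp _)
  · rw [neg_neg]
    exact (mul_le_of_le_one_right (sigmoid_nonneg _) (sigmoid_le_one _)).trans (sigmoid_le_exp _)

lemma contDiff_sigmoid_comp {E : Type*} [NormedAddCommGroup E] [NormedSpace ℝ E] {n : ℕ∞ω}
    {g : E → ℝ} (hg : ContDiff ℝ n g) : ContDiff ℝ n fun p => sigmoid (g p) :=
  (contDiff_sigmoid.of_le le_top).comp hg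

lemma one_sub_sigmoid_sub_mul_exp_add_exp (a b : ℝ) :
    (1 - sigmoid (a - b)) * (exp a + exp b) = exp b := by
  have h : exp a = exp b * exp (a - b) := by rw [← exp_add]; ring_nf
  rw [← sigmoid_neg, sigmoid_def, neg_neg, h]
  field_simp
  ring

lemma sigmoid_sub_mul_exp_add_exp (a b : ℝ) :
    sigmoid (a - b) * (exp a + exp b) = exp a := by
  linear_combination -one_sub_sigmoid_sub_mul_exp_add_exp a b

variable {g v : ℝ → ℝ → ℝ} {W : ℝ × ℝ → ℝ}

lemma pXr_sigmoid_comp (hg : Differentiable ℝ fun p : ℝ × ℝ => g p.1 p.2) :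
    pXr (fun x y => sigmoid (g x y))
      = fun x y => sigmoid (g x y) * (1 - sigmoid (g x y)) * pXr g x y :=
  pXr_eq_of_hasDerivAt fun x y =>
    HasDerivAt.comp (h₂ := sigmoid) x (hasDerivAt_sigmoid _) (hasDerivAt_pXr hg x y)

lemma pYr_sigmoid_comp (hg : Differentiable ℝ fun p : ℝ × ℝ => g p.1 p.2) :
    pYr (fun x y => sigmoid (g x y))
      = fun x y => sigmoid (g x y) * (1 - sigmoid (g x y)) * pYr g x y :=
  pYr_eq_of_hasDerivAt fun x y =>
    HasDerivAt.comp (h₂ := sigmoid) y (hasDerivAt_sigmoid _) (hasDerivAt_pYr hg x y)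

lemma pXr_sigmoid_mul_one_sub_mul {h : ℝ → ℝ → ℝ}
    (hg : Differentiable ℝ fun p : ℝ × ℝ => g p.1 p.2)
    (hh : Differentiable ℝ fun p : ℝ × ℝ => h p.1 p.2) :
    pXr (fun x y => sigmoid (g x y) * (1 - sigmoid (g x y)) * h x y)
      = fun x y => sigmoid (g x y) * (1 - sigmoid (g x y))
        * ((1 - 2 * sigmoid (g x y)) * pXr g x y * h x y + pXr h x y) := by
  refine pXr_eq_of_hasDerivAt fun x y => ?_
  have dσ : HasDerivAt (fun s => sigmoid (g s y))
      (sigmoid (g x y) * (1 - sigmoid (g x y)) * pXr g x y) x :=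
    HasDerivAt.comp (h₂ := sigmoid) x (hasDerivAt_sigmoid _) (hasDerivAt_pXr hg x y)
  refine ((dσ.fun_mul (dσ.const_sub 1)).fun_mul (hasDerivAt_pXr hh x y)).congr_deriv ?_
  ring

theorem isDominatedDualSolution_sigmoid_comp (hg : ContDiff ℝ 2 fun p : ℝ × ℝ => g p.1 p.2)
    (hgv : ∀ x y, pYr g x y
      = pXr (pXr g) x y + (2 * v x y + (1 - 2 * sigmoid (g x y)) * pXr g x y) * pXr g x y)
    (hpos : ∀ x y, 0 < pXr g x y)
    (hx : (fun p : ℝ × ℝ => pXr g p.1 p.2) =O[⊤] fun _ => (1 : ℝ))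
    (hy : (fun p : ℝ × ℝ => pYr g p.1 p.2) =O[⊤] fun _ => (1 : ℝ))
    (hxy : (fun p : ℝ × ℝ => pXr (pYr g) p.1 p.2) =O[⊤] fun _ => (1 : ℝ))
    (hW : (fun p : ℝ × ℝ => sigmoid (g p.1 p.2) * (1 - sigmoid (g p.1 p.2))) =O[⊤] W) :
    IsDominatedDualSolution v (fun x y => sigmoid (g x y)) W := by
  have dg := hg.differentiable two_ne_zero
  have mul_isBigO {r : ℝ × ℝ → ℝ} (hr : r =O[⊤] fun _ => (1 : ℝ)) :
      (fun p => sigmoid (g p.1 p.2) * (1 - sigmoid (g p.1 p.2)) * r p) =O[⊤] W := by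
    simpa only [mul_one] using hW.mul hr
  have hσ : (fun p : ℝ × ℝ => 1 - 2 * sigmoid (g p.1 p.2)) =O[⊤] fun _ => (1 : ℝ) :=
    isBigO_top.2 ⟨1, fun p => by
      rw [norm_one, mul_one, norm_eq_abs, abs_le]
      constructor <;> linarith [sigmoid_nonneg (g p.1 p.2), sigmoid_le_one (g p.1 p.2)]⟩
  refine ⟨contDiff_sigmoid_comp hg, fun x y => ?_, fun x y => ?_, ?_, ?_, ?_⟩
  · rw [pYr_sigmoid_comp dg, pXr_sigmoid_comp dg,
      pXr_sigmoid_mul_one_sub_mul dg (differentiable_pXr hg)]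
    linear_combination sigmoid (g x y) * (1 - sigmoid (g x y)) * hgv x y
  · rw [pXr_sigmoid_comp dg]
    exact mul_pos (mul_pos (sigmoid_pos _) (sub_pos.2 (sigmoid_lt_one _))) (hpos x y)
  · rw [pXr_sigmoid_comp dg]
    exact mul_isBigO hx
  · rw [pYr_sigmoid_comp dg]
    exact mul_isBigO hy
  · rw [pYr_sigmoid_comp dg, pXr_sigmoid_mul_one_sub_mul dg (differentiable_pYr hg)]
    refine mul_isBigO (IsBigO.add ?_ hxy)
    simpa only [mul_one] using (hσ.mul hx).mul hy

variable {A B U : ℝ → ℝ → ℝ}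

lemma pXr_log_exp_add_exp (hA : Differentiable ℝ fun p : ℝ × ℝ => A p.1 p.2)
    (hB : Differentiable ℝ fun p : ℝ × ℝ => B p.1 p.2) (x y : ℝ) :
    pXr (fun x y => log (exp (A x y) + exp (B x y))) x y
      = sigmoid (A x y - B x y) * pXr A x y + (1 - sigmoid (A x y - B x y)) * pXr B x y := by
  have hpos : exp (A x y) + exp (B x y) ≠ 0 := by positivity
  refine ((((hasDerivAt_pXr hA x y).exp.fun_add (hasDerivAt_pXr hB x y).exp).log
    hpos).congr_deriv ?_).deriv
  rw [div_eq_iff hpos]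
  linear_combination -pXr A x y * sigmoid_sub_mul_exp_add_exp (A x y) (B x y)
    - pXr B x y * one_sub_sigmoid_sub_mul_exp_add_exp (A x y) (B x y)

/- The hypotheses say that `e^A` and `e^B` both solve `ψ_y = ψ_xx + U ψ`, so the quotient
`sigmoid (A - B)` of `e^A` by `e^A + e^B` solves the equation with drift `∂_x log (e^A + e^B)`. -/
lemma pYr_sub_eq_of_pYr_eq (hA : ContDiff ℝ 2 fun p : ℝ × ℝ => A p.1 p.2)
    (hB : ContDiff ℝ 2 fun p : ℝ × ℝ => B p.1 p.2)
    (hAU : ∀ x y, pYr A x y = pXr (pXr A) x y + pXr A x y ^ 2 + U x y)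
    (hBU : ∀ x y, pYr B x y = pXr (pXr B) x y + pXr B x y ^ 2 + U x y) (x y : ℝ) :
    pYr (fun x y => A x y - B x y) x y
      = pXr (pXr fun x y => A x y - B x y) x y
        + (2 * pXr (fun x y => log (exp (A x y) + exp (B x y))) x y
            + (1 - 2 * sigmoid (A x y - B x y)) * pXr (fun x y => A x y - B x y) x y)
          * pXr (fun x y => A x y - B x y) x y := by
  have dA := hA.differentiable two_ne_zero
  have dB := hB.differentiable two_ne_zero
  rw [pYr_sub dA dB, pXr_sub dA dB, pXr_sub (differentiable_pXr hA) (differentiable_pXr hB),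
    pXr_log_exp_add_exp dA dB]
  linear_combination hAU x y - hBU x y

end Sigmoid

section Soliton

variable {κ₁ κ₂ κ₃ κ₄ κ : ℝ}

/-- The slope `∂_x log τ₁` of the `[2,3]`-soliton factor. -/
noncomputable def solitonSlope (κ₂ κ₃ x y : ℝ) : ℝ :=
  κ₂ + (κ₃ - κ₂) * sigmoid ((κ₃ - κ₂) * (x + (κ₂ + κ₃) * y))

/-- The logarithm of `|κ - ∂_x log τ₁| e^{κx + κ²y}`, the Darboux transform by `τ₁` of the free wave
with wave number `κ`. The absolute value is left to `Real.log`, for which `log (-t) = log t`. -/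
noncomputable def dressedPhase (κ₂ κ₃ κ x y : ℝ) : ℝ :=
  κ * x + κ ^ 2 * y + log (κ - solitonSlope κ₂ κ₃ x y)

lemma solitonSlope_mem_uIcc (κ₂ κ₃ x y : ℝ) : solitonSlope κ₂ κ₃ x y ∈ uIcc κ₂ κ₃ := by
  rw [← segment_eq_uIcc, segment_eq_image']
  exact ⟨_, ⟨sigmoid_nonneg _, sigmoid_le_one _⟩, congrArg (κ₂ + ·) (mul_comm _ _)⟩

lemma contDiff_solitonSlope (κ₂ κ₃ : ℝ) {n : ℕ∞ω} :
    ContDiff ℝ n fun p : ℝ × ℝ => solitonSlope κ₂ κ₃ p.1 p.2 :=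
  contDiff_const.add (contDiff_const.mul (contDiff_sigmoid_comp (by fun_prop)))

lemma hasDerivAt_solitonSlope_fst (κ₂ κ₃ x y : ℝ) :
    HasDerivAt (fun s => solitonSlope κ₂ κ₃ s y)
      ((solitonSlope κ₂ κ₃ x y - κ₂) * (κ₃ - solitonSlope κ₂ κ₃ x y)) x := by
  have hphase : HasDerivAt (fun s => (κ₃ - κ₂) * (s + (κ₂ + κ₃) * y)) (κ₃ - κ₂) x := by
    simpa using ((hasDerivAt_id' x).add_const ((κ₂ + κ₃) * y)).const_mul (κ₃ - κ₂)
  refine (((HasDerivAt.comp (h₂ := sigmoid) x (hasDerivAt_sigmoid _) hphase).const_mul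
    (κ₃ - κ₂)).const_add κ₂).congr_deriv ?_
  simp only [solitonSlope]
  ring

lemma hasDerivAt_solitonSlope_snd (κ₂ κ₃ x y : ℝ) :
    HasDerivAt (fun s => solitonSlope κ₂ κ₃ x s)
      ((κ₂ + κ₃) * ((solitonSlope κ₂ κ₃ x y - κ₂) * (κ₃ - solitonSlope κ₂ κ₃ x y))) y := by
  have hphase : HasDerivAt (fun s => (κ₃ - κ₂) * (x + (κ₂ + κ₃) * s))
      ((κ₃ - κ₂) * (κ₂ + κ₃)) y := by
    simpa using (((hasDerivAt_id' y).const_mul (κ₂ + κ₃)).const_add x).const_mul (κ₃ - κ₂)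
  refine (((HasDerivAt.comp (h₂ := sigmoid) y (hasDerivAt_sigmoid _) hphase).const_mul
    (κ₃ - κ₂)).const_add κ₂).congr_deriv ?_
  simp only [solitonSlope]
  ring

lemma solitonSlope_mul_Ptau1 (κ₂ κ₃ x y : ℝ) :
    solitonSlope κ₂ κ₃ x y * Ptau1 κ₂ κ₃ x y
      = κ₂ * exp (κ₂ * x + κ₂ ^ 2 * y) + κ₃ * exp (κ₃ * x + κ₃ ^ 2 * y) := by
  have h := sigmoid_sub_mul_exp_add_exp (κ₃ * x + κ₃ ^ 2 * y) (κ₂ * x + κ₂ ^ 2 * y)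
  have hphase : κ₃ * x + κ₃ ^ 2 * y - (κ₂ * x + κ₂ ^ 2 * y)
      = (κ₃ - κ₂) * (x + (κ₂ + κ₃) * y) := by ring
  rw [hphase] at h
  simp only [solitonSlope, Ptau1]
  linear_combination (κ₃ - κ₂) * h

lemma isBigO_one_comp_solitonSlope {g : ℝ → ℝ} (hg : ContinuousOn g (uIcc κ₂ κ₃)) :
    (fun p : ℝ × ℝ => g (solitonSlope κ₂ κ₃ p.1 p.2)) =O[⊤] fun _ => (1 : ℝ) := by
  obtain ⟨C, hC⟩ := isCompact_uIcc.exists_bound_of_continuousOn hg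
  exact isBigO_top.2 ⟨C, fun p => by simpa using hC _ (solitonSlope_mem_uIcc κ₂ κ₃ p.1 p.2)⟩

lemma sub_solitonSlope_ne_zero (hκ : κ ∉ uIcc κ₂ κ₃) (x y : ℝ) :
    κ - solitonSlope κ₂ κ₃ x y ≠ 0 :=
  sub_ne_zero.2 fun h => hκ (h ▸ solitonSlope_mem_uIcc κ₂ κ₃ x y)

lemma contDiff_dressedPhase (hκ : κ ∉ uIcc κ₂ κ₃) {n : ℕ∞ω} :
    ContDiff ℝ n fun p : ℝ × ℝ => dressedPhase κ₂ κ₃ κ p.1 p.2 :=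
  ContDiff.add (by fun_prop) <| (contDiff_const.sub (contDiff_solitonSlope κ₂ κ₃)).log
    fun p => sub_solitonSlope_ne_zero hκ p.1 p.2

lemma pXr_dressedPhase (hκ : κ ∉ uIcc κ₂ κ₃) :
    pXr (dressedPhase κ₂ κ₃ κ) = fun x y => κ₂ + κ₃ - solitonSlope κ₂ κ₃ x y
      + (κ - κ₂) * (κ - κ₃) / (κ - solitonSlope κ₂ κ₃ x y) := by
  refine pXr_eq_of_hasDerivAt fun x y => ?_
  have hne := sub_solitonSlope_ne_zero hκ x y
  refine ((((hasDerivAt_id' x).const_mul κ).add_const (κ ^ 2 * y)).fun_add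
    (((hasDerivAt_solitonSlope_fst κ₂ κ₃ x y).const_sub κ).log hne)).congr_deriv ?_
  field_simp
  ring

lemma pYr_dressedPhase (hκ : κ ∉ uIcc κ₂ κ₃) :
    pYr (dressedPhase κ₂ κ₃ κ)
      = fun x y => κ ^ 2 + (κ₂ + κ₃) * (pXr (dressedPhase κ₂ κ₃ κ) x y - κ) := by
  refine pYr_eq_of_hasDerivAt fun x y => ?_
  have hne := sub_solitonSlope_ne_zero hκ x y
  rw [pXr_dressedPhase hκ]
  refine ((((hasDerivAt_id' y).const_mul (κ ^ 2)).const_add (κ * x)).fun_add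
    (((hasDerivAt_solitonSlope_snd κ₂ κ₃ x y).const_sub κ).log hne)).congr_deriv ?_
  field_simp
  ring

lemma pXr_pXr_dressedPhase (hκ : κ ∉ uIcc κ₂ κ₃) :
    pXr (pXr (dressedPhase κ₂ κ₃ κ)) = fun x y =>
      (solitonSlope κ₂ κ₃ x y - κ₂) * (κ₃ - solitonSlope κ₂ κ₃ x y)
        * ((κ - κ₂) * (κ - κ₃) / (κ - solitonSlope κ₂ κ₃ x y) ^ 2 - 1) := by
  refine pXr_eq_of_hasDerivAt fun x y => ?_
  have hne := sub_solitonSlope_ne_zero hκ x y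
  have dm := hasDerivAt_solitonSlope_fst κ₂ κ₃ x y
  rw [pXr_dressedPhase hκ]
  refine ((dm.const_sub (κ₂ + κ₃)).fun_add
    ((hasDerivAt_const x ((κ - κ₂) * (κ - κ₃))).fun_div (dm.const_sub κ) hne)).congr_deriv ?_
  field_simp
  ring

lemma pXr_pYr_dressedPhase (hκ : κ ∉ uIcc κ₂ κ₃) :
    pXr (pYr (dressedPhase κ₂ κ₃ κ))
      = fun x y => (κ₂ + κ₃) * pXr (pXr (dressedPhase κ₂ κ₃ κ)) x y := by
  rw [pYr_dressedPhase hκ]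
  exact pXr_eq_of_hasDerivAt fun x y =>
    (((hasDerivAt_pXr (differentiable_pXr (contDiff_dressedPhase hκ)) x y).sub_const
      κ).const_mul _).const_add _

lemma pYr_dressedPhase_eq_pXr_pXr_add (hκ : κ ∉ uIcc κ₂ κ₃) (x y : ℝ) :
    pYr (dressedPhase κ₂ κ₃ κ) x y
      = pXr (pXr (dressedPhase κ₂ κ₃ κ)) x y + pXr (dressedPhase κ₂ κ₃ κ) x y ^ 2
        + 2 * ((solitonSlope κ₂ κ₃ x y - κ₂) * (κ₃ - solitonSlope κ₂ κ₃ x y)) := by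
  have hne := sub_solitonSlope_ne_zero hκ x y
  rw [pYr_dressedPhase hκ, pXr_pXr_dressedPhase hκ, pXr_dressedPhase hκ]
  field_simp
  ring

lemma isBigO_pXr_dressedPhase (hκ : κ ∉ uIcc κ₂ κ₃) :
    (fun p : ℝ × ℝ => pXr (dressedPhase κ₂ κ₃ κ) p.1 p.2) =O[⊤] fun _ => (1 : ℝ) := by
  rw [pXr_dressedPhase hκ]
  refine isBigO_one_comp_solitonSlope
    (g := fun m => κ₂ + κ₃ - m + (κ - κ₂) * (κ - κ₃) / (κ - m)) ?_
  fun_prop (disch := exact fun m hm => sub_ne_zero.2 fun h => hκ (h ▸ hm))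

lemma isBigO_pYr_dressedPhase (hκ : κ ∉ uIcc κ₂ κ₃) :
    (fun p : ℝ × ℝ => pYr (dressedPhase κ₂ κ₃ κ) p.1 p.2) =O[⊤] fun _ => (1 : ℝ) := by
  have const_isBigO (c : ℝ) : (fun _ : ℝ × ℝ => c) =O[⊤] fun _ => (1 : ℝ) :=
    isBigO_const_const c one_ne_zero ⊤
  rw [pYr_dressedPhase hκ]
  exact (const_isBigO _).add (((isBigO_pXr_dressedPhase hκ).sub (const_isBigO κ)).const_mul_left _)

lemma isBigO_pXr_pYr_dressedPhase (hκ : κ ∉ uIcc κ₂ κ₃) :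
    (fun p : ℝ × ℝ => pXr (pYr (dressedPhase κ₂ κ₃ κ)) p.1 p.2) =O[⊤] fun _ => (1 : ℝ) := by
  rw [pXr_pYr_dressedPhase hκ, pXr_pXr_dressedPhase hκ]
  refine (isBigO_one_comp_solitonSlope
    (g := fun m => (m - κ₂) * (κ₃ - m) * ((κ - κ₂) * (κ - κ₃) / (κ - m) ^ 2 - 1))
    ?_).const_mul_left _
  have hne (m : ℝ) (hm : m ∈ uIcc κ₂ κ₃) : (κ - m) ^ 2 ≠ 0 :=
    pow_ne_zero 2 (sub_ne_zero.2 fun h => hκ (h ▸ hm))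
  fun_prop (disch := exact hne)

lemma solitonSlope_mem_Ioo (h₂ : κ₂ ∈ Ioo κ₁ κ₄) (h₃ : κ₃ ∈ Ioo κ₁ κ₄) (x y : ℝ) :
    solitonSlope κ₂ κ₃ x y ∈ Ioo κ₁ κ₄ :=
  ordConnected_Ioo.uIcc_subset h₂ h₃ (solitonSlope_mem_uIcc κ₂ κ₃ x y)

lemma left_notMem_uIcc_of_mem_Ioo (h₂ : κ₂ ∈ Ioo κ₁ κ₄) (h₃ : κ₃ ∈ Ioo κ₁ κ₄) :
    κ₁ ∉ uIcc κ₂ κ₃ :=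
  fun h => lt_irrefl _ (ordConnected_Ioo.uIcc_subset h₂ h₃ h).1

lemma right_notMem_uIcc_of_mem_Ioo (h₂ : κ₂ ∈ Ioo κ₁ κ₄) (h₃ : κ₃ ∈ Ioo κ₁ κ₄) :
    κ₄ ∉ uIcc κ₂ κ₃ :=
  fun h => lt_irrefl _ (ordConnected_Ioo.uIcc_subset h₂ h₃ h).2

lemma Ptau_div_Ptau1 (h₂ : κ₂ ∈ Ioo κ₁ κ₄) (h₃ : κ₃ ∈ Ioo κ₁ κ₄) (x y : ℝ) :
    Ptau κ₁ κ₂ κ₃ κ₄ x y / Ptau1 κ₂ κ₃ x y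
      = exp (dressedPhase κ₂ κ₃ κ₄ x y) + exp (dressedPhase κ₂ κ₃ κ₁ x y) := by
  obtain ⟨hm₁, hm₄⟩ := solitonSlope_mem_Ioo h₂ h₃ x y
  have hτ : Ptau1 κ₂ κ₃ x y ≠ 0 := by simp only [Ptau1]; positivity
  have hm := solitonSlope_mul_Ptau1 κ₂ κ₃ x y
  rw [div_eq_iff hτ]
  simp only [dressedPhase, exp_add _ (log _), exp_log_eq_abs (sub_ne_zero.2 hm₁.ne),
    exp_log_eq_abs (sub_ne_zero.2 hm₄.ne'), abs_of_pos (sub_pos.2 hm₄), abs_of_neg (sub_neg.2 hm₁)]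
  have hexp (a b : ℝ) : exp ((a + b) * x + (a ^ 2 + b ^ 2) * y)
      = exp (a * x + a ^ 2 * y) * exp (b * x + b ^ 2 * y) := by
    rw [← exp_add]; ring_nf
  simp only [Ptau, hexp]
  simp only [Ptau1] at hm ⊢
  linear_combination
    (exp (κ₄ * x + κ₄ ^ 2 * y) - exp (κ₁ * x + κ₁ ^ 2 * y)) * hm

lemma pXr_dressedPhase_lt (h₂ : κ₂ ∈ Ioo κ₁ κ₄) (h₃ : κ₃ ∈ Ioo κ₁ κ₄) (x y : ℝ) :
    pXr (dressedPhase κ₂ κ₃ κ₁) x y < pXr (dressedPhase κ₂ κ₃ κ₄) x y := by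
  obtain ⟨hm₁, hm₄⟩ := solitonSlope_mem_Ioo h₂ h₃ x y
  rw [pXr_dressedPhase (left_notMem_uIcc_of_mem_Ioo h₂ h₃),
    pXr_dressedPhase (right_notMem_uIcc_of_mem_Ioo h₂ h₃)]
  refine add_lt_add_right (lt_trans (b := 0) ?_ ?_) _
  · exact div_neg_of_pos_of_neg
      (mul_pos_of_neg_of_neg (sub_neg.2 h₂.1) (sub_neg.2 h₃.1)) (sub_neg.2 hm₁)
  · exact div_pos (mul_pos (sub_pos.2 h₂.2) (sub_pos.2 h₃.2)) (sub_pos.2 hm₄)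

lemma isBigO_sigmoid_dressedPhase_sub (h₂ : κ₂ ∈ Ioo κ₁ κ₄) (h₃ : κ₃ ∈ Ioo κ₁ κ₄) {β : ℝ}
    (hβ : |β| ≤ κ₄ - κ₁) :
    (fun p : ℝ × ℝ =>
      sigmoid (dressedPhase κ₂ κ₃ κ₄ p.1 p.2 - dressedPhase κ₂ κ₃ κ₁ p.1 p.2)
        * (1 - sigmoid (dressedPhase κ₂ κ₃ κ₄ p.1 p.2 - dressedPhase κ₂ κ₃ κ₁ p.1 p.2)))
      =O[⊤] fun p => exp (β * (p.1 + (κ₁ + κ₄) * p.2)) := by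
  have hlog : ContinuousOn (fun m => log (κ₄ - m) - log (κ₁ - m)) (uIcc κ₂ κ₃) := by
    have h₁ := left_notMem_uIcc_of_mem_Ioo h₂ h₃
    have h₄ := right_notMem_uIcc_of_mem_Ioo h₂ h₃
    exact .sub (.log (by fun_prop) fun m hm => sub_ne_zero.2 fun h => h₄ (h ▸ hm))
      (.log (by fun_prop) fun m hm => sub_ne_zero.2 fun h => h₁ (h ▸ hm))
  obtain ⟨K, hK⟩ := isBigO_top.1 (isBigO_one_comp_solitonSlope hlog)
  refine isBigO_top.2 ⟨exp K, fun p => ?_⟩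
  set z := p.1 + (κ₁ + κ₄) * p.2 with hz
  set ρ := log (κ₄ - solitonSlope κ₂ κ₃ p.1 p.2) - log (κ₁ - solitonSlope κ₂ κ₃ p.1 p.2) with hρ
  have hρK : |ρ| ≤ K := by simpa using hK p
  have hphase : dressedPhase κ₂ κ₃ κ₄ p.1 p.2 - dressedPhase κ₂ κ₃ κ₁ p.1 p.2
      = (κ₄ - κ₁) * z + ρ := by
    simp only [dressedPhase, hz, hρ]; ring
  have habs : -|(κ₄ - κ₁) * z + ρ| ≤ K + β * z := by
    have hβz : -(β * z) ≤ |(κ₄ - κ₁) * z| := by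
      calc -(β * z) ≤ |β * z| := neg_le_abs _
        _ = |β| * |z| := abs_mul _ _
        _ ≤ |κ₄ - κ₁| * |z| := mul_le_mul_of_nonneg_right (hβ.trans (le_abs_self _)) (abs_nonneg z)
        _ = |(κ₄ - κ₁) * z| := (abs_mul _ _).symm
    have htri := abs_sub_abs_le_abs_add ((κ₄ - κ₁) * z) ρ
    linarith
  rw [hphase, norm_of_nonneg (mul_nonneg (sigmoid_nonneg _) (sub_nonneg.2 (sigmoid_le_one _))),
    norm_of_nonneg (exp_pos _).le, ← exp_add]
  exact (sigmoid_mul_one_sub_le_exp_neg_abs _).trans (exp_le_exp.2 habs)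

theorem isDominatedDualSolution_soliton (h₂ : κ₂ ∈ Ioo κ₁ κ₄) (h₃ : κ₃ ∈ Ioo κ₁ κ₄) {β : ℝ}
    (hβ : |β| ≤ κ₄ - κ₁) :
    IsDominatedDualSolution (pXr fun x y => log (Ptau κ₁ κ₂ κ₃ κ₄ x y / Ptau1 κ₂ κ₃ x y))
      (fun x y => sigmoid (dressedPhase κ₂ κ₃ κ₄ x y - dressedPhase κ₂ κ₃ κ₁ x y))
      (fun p => exp (β * (p.1 + (κ₁ + κ₄) * p.2))) := by
  have hκ₁ := left_notMem_uIcc_of_mem_Ioo h₂ h₃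
  have hκ₄ := right_notMem_uIcc_of_mem_Ioo h₂ h₃
  have c₁ : ContDiff ℝ 2 _ := contDiff_dressedPhase hκ₁
  have c₄ : ContDiff ℝ 2 _ := contDiff_dressedPhase hκ₄
  have d₁ := c₁.differentiable two_ne_zero
  have d₄ := c₄.differentiable two_ne_zero
  simp only [Ptau_div_Ptau1 h₂ h₃]
  refine isDominatedDualSolution_sigmoid_comp (c₄.sub c₁)
    (pYr_sub_eq_of_pYr_eq c₄ c₁ (pYr_dressedPhase_eq_pXr_pXr_add hκ₄)
      (pYr_dressedPhase_eq_pXr_pXr_add hκ₁))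
    (fun x y => ?_) ?_ ?_ ?_ (isBigO_sigmoid_dressedPhase_sub h₂ h₃ hβ)
  · rw [pXr_sub d₄ d₁]
    exact sub_pos.2 (pXr_dressedPhase_lt h₂ h₃ x y)
  · rw [pXr_sub d₄ d₁]
    exact (isBigO_pXr_dressedPhase hκ₄).sub (isBigO_pXr_dressedPhase hκ₁)
  · rw [pYr_sub d₄ d₁]
    exact (isBigO_pYr_dressedPhase hκ₄).sub (isBigO_pYr_dressedPhase hκ₁)
  · rw [pYr_sub d₄ d₁, pXr_sub (differentiable_pYr c₄) (differentiable_pYr c₁)]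
    exact (isBigO_pXr_pYr_dressedPhase hκ₄).sub (isBigO_pXr_pYr_dressedPhase hκ₁)

end Soliton

theorem kernel_nabla_M_plus_trivial_general {κ₁ κ₂ κ₃ κ₄ a₁₄ c₁₄ α : ℝ}
    (h₂ : κ₂ ∈ Ioo κ₁ κ₄) (h₃ : κ₃ ∈ Ioo κ₁ κ₄) (ha14 : a₁₄ = (κ₁ + κ₄) / 2)
    (hc14 : c₁₄ = (κ₄ - κ₁) ^ 2 / 4) (hα : |α| ≤ √c₁₄) {φ : ℝ → ℝ → ℝ}
    (hφ : ContDiff ℝ 2 fun p : ℝ × ℝ => φ p.1 p.2)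
    (hφ2 : Integrable fun p : ℝ × ℝ => φ p.1 p.2 ^ 2 * exp (2 * α * (p.1 + 2 * a₁₄ * p.2)))
    (hφx2 : Integrable fun p : ℝ × ℝ => pXr φ p.1 p.2 ^ 2 * exp (2 * α * (p.1 + 2 * a₁₄ * p.2)))
    (hφy2 : Integrable fun p : ℝ × ℝ => pYr φ p.1 p.2 ^ 2 * exp (2 * α * (p.1 + 2 * a₁₄ * p.2)))
    (hPDE : ∀ x y, pYr φ x y + pXr (pXr φ) x y
      = 2 * pXr (fun a b => log (Ptau κ₁ κ₂ κ₃ κ₄ a b / Ptau1 κ₂ κ₃ a b)) x y * pXr φ x y)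
    (x y : ℝ) : φ x y = 0 := by
  have weight_eq (p : ℝ × ℝ) : p.1 + (κ₁ + κ₄) * p.2 = p.1 + 2 * a₁₄ * p.2 := by
    rw [ha14, mul_div_cancel₀ _ two_ne_zero]
  have hβ : |2 * α| ≤ κ₄ - κ₁ := by
    have hc : c₁₄ = ((κ₄ - κ₁) / 2) ^ 2 := by rw [hc14]; ring
    rw [hc, sqrt_sq (by linarith [h₂.1, h₂.2])] at hα
    rw [abs_mul, abs_two]
    linarith
  have hR := isDominatedDualSolution_soliton h₂ h₃ hβ
  simp only [weight_eq] at hR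
  have φ_eq (x y : ℝ) : φ x y = φ 0 y :=
    is_const_of_deriv_eq_zero
      (fun s => (hasDerivAt_pXr (hφ.differentiable two_ne_zero) s y).differentiableAt)
      (fun s => hR.pXr_eq_zero hφ hPDE hφ2 hφx2 hφy2 s y) x 0
  have slice_not_integrable (y : ℝ) :
      ¬ Integrable fun x => exp (2 * α * (x + 2 * a₁₄ * y)) := by
    simp only [mul_add (2 * α), exp_add, integrable_mul_const_iff (exp_pos _).ne'.isUnit]
    exact not_integrable_exp_const_mul (2 * α)
  have φ_sq_eq_zero : (fun y => φ 0 y ^ 2) = 0 := by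
    simp only [φ_eq] at hφ2
    exact eq_zero_of_integrable_mul_of_not_integrable_fst
      ((hφ.continuous.comp (continuous_const.prodMk continuous_id)).pow 2)
      slice_not_integrable hφ2
  rw [φ_eq, (pow_eq_zero_iff two_ne_zero).1 (congrFun φ_sq_eq_zero y)]

/-- triviality of the kernel of the linearized Miura
transformation ∇M₊(v₂) in the weighted space L²(e^{2αz₂}). -/
theorem kernel_nabla_M_plus_trivial
    (κ₁ κ₂ κ₃ κ₄ a₂₃ a₁₄ c₁₄ α : ℝ)
    (h12 : κ₁ < κ₂) (h23 : κ₂ < κ₃) (h34 : κ₃ < κ₄)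
    (hne : κ₂ + κ₃ ≠ κ₁ + κ₄)
    (ha23 : a₂₃ = (κ₂ + κ₃)/2) (ha14 : a₁₄ = (κ₁ + κ₄)/2)
    (hc14 : c₁₄ = (κ₄ - κ₁)^2/4)
    (hα0 : 0 < α) (hα1 : α < Real.sqrt c₁₄)
    (φ : ℝ → ℝ → ℝ)
    (hφ : ContDiff ℝ (⊤ : ℕ∞) fun p : ℝ × ℝ => φ p.1 p.2)
    (hL2 : ∀ i j : ℕ, Integrable fun p : ℝ × ℝ =>
      ((pXr^[i] (pYr^[j] φ)) p.1 p.2)^2 * Real.exp (2*α*(p.1 + 2*a₁₄*p.2)))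
    (hPDE : ∀ x y,
      pYr φ x y + pXr (pXr φ) x y
        = 2 * pXr (fun a b =>
            Real.log (Ptau κ₁ κ₂ κ₃ κ₄ a b / Ptau1 κ₂ κ₃ a b)) x y
          * pXr φ x y) :
    ∀ x y, φ x y = 0 := by
  exact kernel_nabla_M_plus_trivial_general ⟨h12, h23.trans h34⟩ ⟨h12.trans h23, h34⟩ ha14 hc14
    ((abs_of_pos hα0).trans_le hα1.le) (contDiff_infty.1 hφ 2)
    (hL2 0 0) (hL2 1 0) (hL2 0 1) hPDE
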